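/- Let A be a symmetric invertible real n×n matrix, let R and S be symmetric positive definite real n×n matrices, and let K be a natural number with K ≥ 2. Then (1/K) · Tr(A⁻¹(R + S)A⁻¹) < Tr(A⁻¹(R + (1/K)·S)A⁻¹) < Tr(A⁻¹(R + S)A⁻¹). -/

import Mathlib

open Matrix

/-!
For `B ≠ 0` the linear functional `M ↦ Tr(B M Bᴴ)` is positive on positive definite matrices: it
sums the values of the form `M` at the rows of `B`. The gaps in the two inequalities are
`(1 - t) Tr(B R Bᴴ)` and `(1 - t) Tr(B S Bᴴ)`, where `t = 1/K` and `B = A⁻¹`.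
-/

section Positivity

variable {ι κ α : Type*} [Fintype κ] [Ring α] [PartialOrder α] [StarRing α]

theorem mul_mul_conjTranspose_diag_pos {M : Matrix κ κ α} (hM : M.PosDef) {B : Matrix ι κ α}
    {i : ι} (hi : B i ≠ 0) : 0 < (B * M * Bᴴ) i i := by
  have hpos := hM.dotProduct_mulVec_pos (star_ne_zero.mpr hi)
  rwa [star_star, dotProduct_mulVec] at hpos

theorem trace_mul_mul_conjTranspose_pos [Fintype ι] [IsOrderedCancelAddMonoid α]
    {M : Matrix κ κ α} (hM : M.PosDef) {B : Matrix ι κ α} (hB : B ≠ 0) :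
    0 < (B * M * Bᴴ).trace := by
  obtain ⟨i, hi⟩ := Function.ne_iff.mp hB
  exact Finset.sum_pos' (fun _ _ ↦ (hM.posSemidef.mul_mul_conjTranspose_same B).diag_nonneg)
    ⟨i, Finset.mem_univ i, mul_mul_conjTranspose_diag_pos hM hi⟩

end Positivity

section TraceGaps

variable {ι κ μ α : Type*} [Fintype ι] [Fintype κ] [Fintype μ] [CommRing α]

theorem trace_mul_add_smul_mul (B : Matrix ι κ α) (R S : Matrix κ μ α) (C : Matrix μ ι α) (t : α) :
    (B * (R + t • S) * C).trace = (B * R * C).trace + t * (B * S * C).trace := by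
  simp only [Matrix.mul_add, Matrix.add_mul, trace_add, Matrix.mul_smul, Matrix.smul_mul,
    trace_smul, smul_eq_mul]

theorem trace_mul_add_smul_mul_sub_mul_trace (B : Matrix ι κ α) (R S : Matrix κ μ α)
    (C : Matrix μ ι α) (t : α) :
    (B * (R + t • S) * C).trace - t * (B * (R + S) * C).trace
      = (1 - t) * (B * R * C).trace := by
  rw [trace_mul_add_smul_mul, Matrix.mul_add, Matrix.add_mul, trace_add]
  ring

theorem trace_mul_add_mul_sub_trace (B : Matrix ι κ α) (R S : Matrix κ μ α)
    (C : Matrix μ ι α) (t : α) :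
    (B * (R + S) * C).trace - (B * (R + t • S) * C).trace = (1 - t) * (B * S * C).trace := by
  rw [trace_mul_add_smul_mul, Matrix.mul_add, Matrix.add_mul, trace_add]
  ring

end TraceGaps

theorem nonsing_inv_ne_zero {ι α : Type*} [Fintype ι] [DecidableEq ι] [Nonempty ι] [CommRing α]
    [Nontrivial α] {A : Matrix ι ι α} (hA : IsUnit A.det) : A⁻¹ ≠ 0 :=
  (isUnit_nonsing_inv_iff.mpr ((isUnit_iff_isUnit_det A).mpr hA)).ne_zero

theorem mcrb_trace_ratio_matrix_general
    {ι κ α : Type*} [Fintype ι] [Fintype κ]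
    [CommRing α] [PartialOrder α] [IsStrictOrderedRing α] [StarRing α]
    {B : Matrix ι κ α} (hB : B ≠ 0) {R S : Matrix κ κ α} (hR : R.PosDef) (hS : S.PosDef)
    {t : α} (ht : t < 1) :
    t * (B * (R + S) * Bᴴ).trace < (B * (R + t • S) * Bᴴ).trace ∧
    (B * (R + t • S) * Bᴴ).trace < (B * (R + S) * Bᴴ).trace := by
  have hgap : 0 < 1 - t := sub_pos.mpr ht
  constructor
  · rw [← sub_pos, trace_mul_add_smul_mul_sub_mul_trace]
    exact mul_pos hgap (trace_mul_mul_conjTranspose_pos hR hB)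
  · rw [← sub_pos, trace_mul_add_mul_sub_trace]
    exact mul_pos hgap (trace_mul_mul_conjTranspose_pos hS hB)

/-- For a symmetric invertible `A`, positive definite `R, S` and `K ≥ 2`:
`(1/K)·Tr(A⁻¹(R+S)A⁻¹) < Tr(A⁻¹(R + (1/K)·S)A⁻¹) < Tr(A⁻¹(R+S)A⁻¹)`. -/
theorem mcrb_trace_ratio_matrix
    (n : ℕ) (hn : 0 < n) (A R S : Matrix (Fin n) (Fin n) ℝ)
    (hAsymm : A.IsSymm) (hAinv : IsUnit A.det)
    (hR : R.PosDef) (hS : S.PosDef) (K : ℕ) (hK : 2 ≤ K) :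
    (1 / (K : ℝ)) * (A⁻¹ * (R + S) * A⁻¹).trace
        < (A⁻¹ * (R + (1 / (K : ℝ)) • S) * A⁻¹).trace ∧
    (A⁻¹ * (R + (1 / (K : ℝ)) • S) * A⁻¹).trace < (A⁻¹ * (R + S) * A⁻¹).trace := by
  have : NeZero n := ⟨hn.ne'⟩
  have ht : 1 / (K : ℝ) < 1 :=
    (one_div (K : ℝ)).trans_lt (inv_lt_one_of_one_lt₀ (Nat.one_lt_cast.mpr hK))
  simpa only [(isHermitian_iff_isSymm.mpr hAsymm.inv).eq] using
    mcrb_trace_ratio_matrix_general (nonsing_inv_ne_zero hAinv) hR hS ht
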